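/- arXiv:1812.11378 — 2 statements merged into one kernel-verified Lean document; each statement's English description precedes it below -/
import Mathlib

section
/- Fix h ∈ 𝔥. The map A ↦ (Im A, A(h)) is a bijection from the set of self-adjoint idempotents on 𝔥 onto Reg(𝔥)_h which is an order isomorphism, where self-adjoint idempotents are ordered by A₁ ≤ A₂ iff A₂A₁ = A₁ and A₂(A₁h) = A₁h = A₁(A₂h), and Reg(𝔥)_h is ordered by (𝔥',h') ≤ (𝔥'',h'') iff 𝔥' ⊆ 𝔥'' and P_{𝔥''}(h') = h' = P_{𝔥'}(h''); moreover this bijection is equivariant for the actions of O(𝔥)_h given by σ·A = σ∘A∘σ⁻¹ on idempotents and σ·(𝔥',h') = (σ(𝔥'), σ(h')) on Reg(𝔥)_h. -/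
/-- A subspace `W` is regular if the restriction of the bilinear form `B` to `W`
is nondegenerate. -/
def IsRegularSubspace {V : Type*} [AddCommGroup V] [Module ℂ V]
    (B : LinearMap.BilinForm ℂ V) (W : Submodule ℂ V) : Prop :=
  ∀ x ∈ W, (∀ y ∈ W, B x y = 0) → x = 0

/-- `IsOrthProj B W x y` : `y` is the orthogonal projection `P_W(x)` of `x` onto `W`. -/
def IsOrthProj {V : Type*} [AddCommGroup V] [Module ℂ V]
    (B : LinearMap.BilinForm ℂ V) (W : Submodule ℂ V) (x y : V) : Prop :=
  y ∈ W ∧ ∀ w ∈ W, B (x - y) w = 0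

/-!
The kernel of a self-adjoint idempotent `A` is the orthogonal complement of its image, so `A` is
the orthogonal projection onto its image and is determined by that image. Conversely, if `W` and
`W^⊥` are complementary, then the projection onto `W` along `W^⊥` is self-adjoint. In finite
dimension the subspaces complementary to their orthogonal are exactly the regular ones. Since `A x`
is the only orthogonal projection of `x` onto the image of `A`, the two orders agree condition by
condition.
-/

open LinearMap
open LinearMap (BilinForm)

/-- `y` is an orthogonal projection of `x` onto the submodule `W` with respect to `B`. It is
encoded as a relation because over a general submodule `y` need neither exist nor be unique. -/
def IsOrthogonalProjection {R M : Type*} [CommRing R] [AddCommGroup M] [Module R M]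
    (B : BilinForm R M) (W : Submodule R M) (x y : M) : Prop :=
  y ∈ W ∧ x - y ∈ B.orthogonal W

section Module

variable {R M M' : Type*} [CommRing R] [AddCommGroup M] [Module R M] [AddCommGroup M'] [Module R M']
  {B : BilinForm R M} {A A₁ A₂ : Module.End R M} {W : Submodule R M}

theorem ker_eq_orthogonal_range_of_isSelfAdjoint (hB : B.SeparatingRight)
    (hA : B.IsSelfAdjoint A) : ker A = B.orthogonal (range A) := by
  ext x
  have mem_orthogonal_range_iff : x ∈ B.orthogonal (range A) ↔ ∀ z, B z (A x) = 0 := by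
    simp only [BilinForm.mem_orthogonal_iff, mem_range, forall_exists_index,
      forall_apply_eq_imp_iff, hA _ x]
  rw [mem_orthogonal_range_iff, mem_ker]
  exact ⟨fun hx z => by rw [hx, map_zero], hB (A x)⟩

theorem isCompl_range_orthogonal_range (hB : B.SeparatingRight) (hA : IsIdempotentElem A)
    (hA' : B.IsSelfAdjoint A) : IsCompl (range A) (B.orthogonal (range A)) :=
  ker_eq_orthogonal_range_of_isSelfAdjoint hB hA' ▸ hA.isCompl

theorem eq_of_range_eq_of_isSelfAdjoint (hB : B.SeparatingRight)
    (hA₁ : IsIdempotentElem A₁) (hA₁' : B.IsSelfAdjoint A₁)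
    (hA₂ : IsIdempotentElem A₂) (hA₂' : B.IsSelfAdjoint A₂)
    (hrange : range A₁ = range A₂) : A₁ = A₂ := by
  refine hA₁.ext hA₂ ⟨hrange, ?_⟩
  rw [ker_eq_orthogonal_range_of_isSelfAdjoint hB hA₁',
    ker_eq_orthogonal_range_of_isSelfAdjoint hB hA₂', hrange]

theorem isOrthogonalProjection_range_iff_of_ker_eq (hA : IsIdempotentElem A)
    (hker : ker A = B.orthogonal (range A)) {x y : M} :
    IsOrthogonalProjection B (range A) x y ↔ A x = y := by
  rw [IsOrthogonalProjection, ← hker, hA.mem_range_iff, sub_mem_ker_iff]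
  have apply_apply : A (A x) = A x := by rw [← Module.End.mul_apply, hA.eq]
  constructor
  · rintro ⟨hy, hxy⟩
    exact hxy.trans hy
  · rintro rfl
    exact ⟨apply_apply, apply_apply.symm⟩

theorem isOrthogonalProjection_range_iff (hB : B.SeparatingRight) (hA : IsIdempotentElem A)
    (hA' : B.IsSelfAdjoint A) {x y : M} :
    IsOrthogonalProjection B (range A) x y ↔ A x = y :=
  isOrthogonalProjection_range_iff_of_ker_eq hA (ker_eq_orthogonal_range_of_isSelfAdjoint hB hA')

theorem isOrthogonalProjection_iff_projection_apply_eq (hW : IsCompl W (B.orthogonal W))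
    {x y : M} : IsOrthogonalProjection B W x y ↔ W.projection _ hW x = y := by
  have hker : ker (W.projection _ hW) = B.orthogonal (range (W.projection _ hW)) := by
    rw [Submodule.ker_projection, Submodule.range_projection]
  simpa only [Submodule.range_projection] using
    isOrthogonalProjection_range_iff_of_ker_eq (Submodule.isIdempotentElem_projection hW) hker

theorem isSelfAdjoint_projection_orthogonal (hB : B.IsRefl) (hW : IsCompl W (B.orthogonal W)) :
    B.IsSelfAdjoint (W.projection _ hW) := by
  intro u v
  set P := W.projection _ hW
  have mem (x : M) : P x ∈ W := Submodule.projection_apply_mem hW x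
  have sub_mem (x : M) : x - P x ∈ B.orthogonal W :=
    ((isOrthogonalProjection_iff_projection_apply_eq hW).2 rfl).2
  calc
    B (P u) v = B (P u) (P v) := by
      rw [← sub_eq_zero, ← map_sub]
      exact sub_mem v _ (mem u)
    _ = B u (P v) := by
      rw [eq_comm, ← sub_eq_zero, ← LinearMap.sub_apply, ← map_sub]
      exact hB _ _ (sub_mem u _ (mem v))

theorem isSelfAdjoint_conj {B' : BilinForm R M'} {σ : M ≃ₗ[R] M'}
    (hσ : ∀ x y, B' (σ x) (σ y) = B x y) (hA : B.IsSelfAdjoint A) :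
    B'.IsSelfAdjoint (σ.conj A) := by
  intro u v
  obtain ⟨u, rfl⟩ := σ.surjective u
  obtain ⟨v, rfl⟩ := σ.surjective v
  simpa only [LinearEquiv.conj_apply_apply, σ.symm_apply_apply, hσ] using hA u v

theorem range_conj (σ : M ≃ₗ[R] M') (A : Module.End R M) :
    range (σ.conj A) = (range A).map (σ : M →ₗ[R] M') := by
  rw [LinearEquiv.conj_apply, LinearEquiv.range_comp, range_comp]

end Module

theorem selfAdjoint_idempotents_orderIso_reg_general
    {R M : Type*} [CommRing R] [AddCommGroup M] [Module R M]
    {B : BilinForm R M} (hrefl : B.IsRefl) (hsep : B.SeparatingRight) (h : M) :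
    (∀ A : Module.End R M, IsIdempotentElem A → B.IsSelfAdjoint A →
      IsCompl (range A) (B.orthogonal (range A)) ∧
      IsOrthogonalProjection B (range A) h (A h)) ∧
    (∀ A₁ A₂ : Module.End R M,
      IsIdempotentElem A₁ → B.IsSelfAdjoint A₁ → IsIdempotentElem A₂ → B.IsSelfAdjoint A₂ →
      range A₁ = range A₂ → A₁ h = A₂ h → A₁ = A₂) ∧
    (∀ (W : Submodule R M) (h' : M), IsCompl W (B.orthogonal W) →
      IsOrthogonalProjection B W h h' →
      ∃ A : Module.End R M, IsIdempotentElem A ∧ B.IsSelfAdjoint A ∧ range A = W ∧ A h = h') ∧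
    (∀ A₁ A₂ : Module.End R M,
      IsIdempotentElem A₁ → B.IsSelfAdjoint A₁ → IsIdempotentElem A₂ → B.IsSelfAdjoint A₂ →
      ((A₂ ∘ₗ A₁ = A₁ ∧ A₂ (A₁ h) = A₁ h ∧ A₁ (A₂ h) = A₁ h) ↔
        (range A₁ ≤ range A₂ ∧ IsOrthogonalProjection B (range A₂) (A₁ h) (A₁ h) ∧
          IsOrthogonalProjection B (range A₁) (A₂ h) (A₁ h)))) ∧
    (∀ σ : M ≃ₗ[R] M, (∀ x y, B (σ x) (σ y) = B x y) → σ h = h →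
      ∀ A : Module.End R M, IsIdempotentElem A → B.IsSelfAdjoint A →
        IsIdempotentElem (σ.conj A) ∧ B.IsSelfAdjoint (σ.conj A) ∧
        range (σ.conj A) = (range A).map (σ : M →ₗ[R] M) ∧ σ.conj A h = σ (A h)) := by
  refine ⟨fun A hA hA' => ?maps_to, fun A₁ A₂ hA₁ hA₁' hA₂ hA₂' hrange _ => ?injective,
    fun W h' hW hh' => ?surjective, fun A₁ A₂ hA₁ hA₁' hA₂ hA₂' => ?order,
    fun σ hσ hσh A hA hA' => ?equivariant⟩
  case maps_to =>
    exact ⟨isCompl_range_orthogonal_range hsep hA hA',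
      (isOrthogonalProjection_range_iff hsep hA hA').2 rfl⟩
  case injective => exact eq_of_range_eq_of_isSelfAdjoint hsep hA₁ hA₁' hA₂ hA₂' hrange
  case surjective =>
    exact ⟨W.projection _ hW, Submodule.isIdempotentElem_projection hW,
      isSelfAdjoint_projection_orthogonal hrefl hW, Submodule.range_projection hW,
      (isOrthogonalProjection_iff_projection_apply_eq hW).1 hh'⟩
  case order =>
    rw [hA₂.comp_eq_right_iff, isOrthogonalProjection_range_iff hsep hA₂ hA₂',
      isOrthogonalProjection_range_iff hsep hA₁ hA₁']
  case equivariant =>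
    refine ⟨hA.map σ.conjRingEquiv, isSelfAdjoint_conj hσ hA', range_conj σ A, ?_⟩
    rw [LinearEquiv.conj_apply_apply, σ.symm_apply_eq.2 hσh.symm]

section VectorSpace

variable {V : Type*} [AddCommGroup V] [Module ℂ V] {B : BilinForm ℂ V} {W : Submodule ℂ V}

theorem isRegularSubspace_iff_isCompl_orthogonal [FiniteDimensional ℂ V] (hB : B.IsRefl) :
    IsRegularSubspace B W ↔ IsCompl W (B.orthogonal W) := by
  rw [BilinForm.isCompl_orthogonal_iff_disjoint hB, Submodule.disjoint_def]
  simp only [IsRegularSubspace, BilinForm.mem_orthogonal_iff, hB.eq_iff]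

theorem isOrthProj_iff_isOrthogonalProjection (hB : B.IsRefl) {x y : V} :
    IsOrthProj B W x y ↔ IsOrthogonalProjection B W x y := by
  simp only [IsOrthProj, IsOrthogonalProjection, BilinForm.mem_orthogonal_iff, hB.eq_iff]

end VectorSpace

/-- the map `A ↦ (Im A, A(h))` is an order isomorphism from the
self-adjoint idempotents on `𝔥` (ordered by `A₁ ≤ A₂ ↔ A₂A₁ = A₁ ∧
A₂(A₁h) = A₁h = A₁(A₂h)`) onto `Reg(𝔥)_h` (ordered by `(𝔥',h') ≤ (𝔥'',h'') ↔
𝔥' ⊆ 𝔥'' ∧ P_{𝔥''}(h') = h' = P_{𝔥'}(h'')`), equivariant for the actions of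
`O(𝔥)_h` given by `σ·A = σ∘A∘σ⁻¹` and `σ·(𝔥',h') = (σ(𝔥'), σ(h'))`. -/
theorem selfAdjoint_idempotents_orderIso_reg
    {V : Type*} [AddCommGroup V] [Module ℂ V] [FiniteDimensional ℂ V]
    (B : LinearMap.BilinForm ℂ V)
    (hsymm : ∀ x y, B x y = B y x) (hnd : B.Nondegenerate) (h : V) :
    -- (a) the map lands in Reg(𝔥)_h
    (∀ A : V →ₗ[ℂ] V, A ∘ₗ A = A → (∀ u v, B (A u) v = B u (A v)) →
      IsRegularSubspace B (LinearMap.range A) ∧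
      IsOrthProj B (LinearMap.range A) h (A h)) ∧
    -- (b) injectivity
    (∀ A₁ A₂ : V →ₗ[ℂ] V,
      A₁ ∘ₗ A₁ = A₁ → (∀ u v, B (A₁ u) v = B u (A₁ v)) →
      A₂ ∘ₗ A₂ = A₂ → (∀ u v, B (A₂ u) v = B u (A₂ v)) →
      LinearMap.range A₁ = LinearMap.range A₂ → A₁ h = A₂ h → A₁ = A₂) ∧
    -- (c) surjectivity onto Reg(𝔥)_h
    (∀ (W : Submodule ℂ V) (h' : V), IsRegularSubspace B W → IsOrthProj B W h h' →
      ∃ A : V →ₗ[ℂ] V, A ∘ₗ A = A ∧ (∀ u v, B (A u) v = B u (A v)) ∧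
        LinearMap.range A = W ∧ A h = h') ∧
    -- (d) order isomorphism
    (∀ A₁ A₂ : V →ₗ[ℂ] V,
      A₁ ∘ₗ A₁ = A₁ → (∀ u v, B (A₁ u) v = B u (A₁ v)) →
      A₂ ∘ₗ A₂ = A₂ → (∀ u v, B (A₂ u) v = B u (A₂ v)) →
      ((A₂ ∘ₗ A₁ = A₁ ∧ A₂ (A₁ h) = A₁ h ∧ A₁ (A₂ h) = A₁ h) ↔
        (LinearMap.range A₁ ≤ LinearMap.range A₂ ∧
          IsOrthProj B (LinearMap.range A₂) (A₁ h) (A₁ h) ∧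
          IsOrthProj B (LinearMap.range A₁) (A₂ h) (A₁ h)))) ∧
    -- (e) O(𝔥)_h-equivariance
    (∀ σ : V ≃ₗ[ℂ] V, (∀ x y, B (σ x) (σ y) = B x y) → σ h = h →
      ∀ A : V →ₗ[ℂ] V, A ∘ₗ A = A → (∀ u v, B (A u) v = B u (A v)) →
        ((σ : V →ₗ[ℂ] V) ∘ₗ A ∘ₗ (σ.symm : V →ₗ[ℂ] V)) ∘ₗ
            ((σ : V →ₗ[ℂ] V) ∘ₗ A ∘ₗ (σ.symm : V →ₗ[ℂ] V)) =
          (σ : V →ₗ[ℂ] V) ∘ₗ A ∘ₗ (σ.symm : V →ₗ[ℂ] V) ∧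
        (∀ u v, B (((σ : V →ₗ[ℂ] V) ∘ₗ A ∘ₗ (σ.symm : V →ₗ[ℂ] V)) u) v =
          B u (((σ : V →ₗ[ℂ] V) ∘ₗ A ∘ₗ (σ.symm : V →ₗ[ℂ] V)) v)) ∧
        LinearMap.range ((σ : V →ₗ[ℂ] V) ∘ₗ A ∘ₗ (σ.symm : V →ₗ[ℂ] V)) =
          (LinearMap.range A).map (σ : V →ₗ[ℂ] V) ∧
        ((σ : V →ₗ[ℂ] V) ∘ₗ A ∘ₗ (σ.symm : V →ₗ[ℂ] V)) h = σ (A h)) := by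
  have hB : B.IsRefl := LinearMap.IsSymm.isRefl ⟨hsymm⟩
  simp only [isRegularSubspace_iff_isCompl_orthogonal hB, isOrthProj_iff_isOrthogonalProjection hB]
  exact selfAdjoint_idempotents_orderIso_reg_general hB hnd.2 h
end

section
/- Fix h ∈ 𝔥. Let 𝔥' and 𝔥'' be regular subspaces of 𝔥 with h ∈ 𝔥' and h ∈ 𝔥''. Then there exists σ ∈ O(𝔥) with σ(h) = h and σ(𝔥') = 𝔥'' if and only if dim 𝔥' = dim 𝔥''. -/
/-!
Regular subspaces of equal dimension over an algebraically closed field are isometric, since each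
carries an orthonormal basis. The isometries of a regular space move any nonzero vector to any other
nonzero vector of the same norm, where two orthogonal isotropic vectors are connected through a
third one orthogonal to neither. So the isometry `W ≃ W'` can be chosen to fix `h`.

It extends to the whole space by Witt's argument: if `B x x = B y y ≠ 0`, then `x - y` and `x + y`
are not both isotropic, so a product of at most two reflections moves `x` to `y`, and these
reflections fix everything orthogonal to both `x` and `y`. The vectors of an orthogonal basis of `W`
can therefore be moved into place one at a time.
-/

open LinearMap (BilinForm)
open Module (finrank)

theorem IsRegularSubspace.nondegenerate_restrict {V : Type*} [AddCommGroup V] [Module ℂ V]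
    {B : BilinForm ℂ V} (hB : B.IsSymm) {W : Submodule ℂ V} (hW : IsRegularSubspace B W) :
    (B.restrict W).Nondegenerate := by
  refine (hB.restrict W).isRefl.nondegenerate_iff_separatingLeft.2 fun x hx => ?_
  exact Subtype.ext (hW x x.2 fun y hy => hx ⟨y, hy⟩)

section Reflection

variable {K V : Type*} [Field K] [AddCommGroup V] [Module K V] {B : BilinForm K V}

/-- The reflection in the hyperplane orthogonal to an anisotropic vector `a`, as an isometry. -/
noncomputable def reflectionIsometryEquiv (hB : B.IsSymm) {a : V} (ha : B a a ≠ 0) :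
    B.IsometryEquiv B where
  toLinearEquiv := Module.reflection (x := a) (f := (2 / B a a) • B a) (by simp [ha])
  map_app' x y := by
    change B (Module.reflection _ x) (Module.reflection _ y) = B x y
    simp only [Module.reflection_apply, map_sub, map_smul, LinearMap.sub_apply,
      LinearMap.smul_apply, smul_eq_mul, hB.eq x a]
    field_simp
    ring

theorem reflectionIsometryEquiv_apply (hB : B.IsSymm) {a : V} (ha : B a a ≠ 0) (x : V) :
    reflectionIsometryEquiv hB ha x = x - (2 / B a a * B a x) • a :=
  Module.reflection_apply (f := (2 / B a a) • B a) x (by simp [ha])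

theorem reflectionIsometryEquiv_apply_self (hB : B.IsSymm) {a : V} (ha : B a a ≠ 0) :
    reflectionIsometryEquiv hB ha a = -a :=
  Module.reflection_apply_self (f := (2 / B a a) • B a) (by simp [ha])

theorem reflectionIsometryEquiv_apply_of_apply_eq_zero (hB : B.IsSymm) {a : V}
    (ha : B a a ≠ 0) {x : V} (hx : B a x = 0) : reflectionIsometryEquiv hB ha x = x := by
  simp [reflectionIsometryEquiv_apply, hx]

theorem reflectionIsometryEquiv_sub_apply (hB : B.IsSymm) {x y : V} (hxy : B x x = B y y)
    (ha : B (x - y) (x - y) ≠ 0) : reflectionIsometryEquiv hB ha x = y := by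
  have hnorm : B (x - y) (x - y) = 2 * B (x - y) x := by
    simp only [map_sub, LinearMap.sub_apply, hB.eq y x]
    linear_combination -hxy
  have hcoeff : 2 / B (x - y) (x - y) * B (x - y) x = 1 := by
    rw [div_mul_eq_mul_div, ← hnorm, div_self ha]
  rw [reflectionIsometryEquiv_apply, hcoeff, one_smul, sub_sub_cancel]

variable [NeZero (2 : K)]

theorem apply_sub_self_ne_zero_or_apply_add_self_ne_zero {x y : V} (hx : B x x ≠ 0)
    (hxy : B x x = B y y) : B (x - y) (x - y) ≠ 0 ∨ B (x + y) (x + y) ≠ 0 := by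
  by_contra! ⟨hsub, hadd⟩
  have parallelogram : B (x - y) (x - y) + B (x + y) (x + y) = 2 * (B x x + B y y) := by
    simp only [map_sub, map_add, LinearMap.sub_apply, LinearMap.add_apply]
    ring
  refine mul_ne_zero two_ne_zero (mul_ne_zero two_ne_zero hx) ?_
  linear_combination hsub + hadd - parallelogram + 2 * hxy

theorem exists_isometryEquiv_apply_eq_of_anisotropic (hB : B.IsSymm) {x y : V} (hx : B x x ≠ 0)
    (hxy : B x x = B y y) :
    ∃ τ : B.IsometryEquiv B, τ x = y ∧ ∀ z, B x z = 0 → B y z = 0 → τ z = z := by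
  rcases apply_sub_self_ne_zero_or_apply_add_self_ne_zero hx hxy with ha | ha
  · refine ⟨reflectionIsometryEquiv hB ha, reflectionIsometryEquiv_sub_apply hB hxy ha,
      fun z hxz hyz => reflectionIsometryEquiv_apply_of_apply_eq_zero hB ha ?_⟩
    simp [hxz, hyz]
  · have hy : B y y ≠ 0 := hxy ▸ hx
    rw [← sub_neg_eq_add] at ha
    refine ⟨(reflectionIsometryEquiv hB ha).trans (reflectionIsometryEquiv hB hy), ?_,
      fun z hxz hyz => ?_⟩
    · change reflectionIsometryEquiv hB hy (reflectionIsometryEquiv hB ha x) = y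
      rw [reflectionIsometryEquiv_sub_apply hB (by simpa using hxy), map_neg,
        reflectionIsometryEquiv_apply_self, neg_neg]
    · change reflectionIsometryEquiv hB hy (reflectionIsometryEquiv hB ha z) = z
      rw [reflectionIsometryEquiv_apply_of_apply_eq_zero hB ha,
        reflectionIsometryEquiv_apply_of_apply_eq_zero hB hy hyz]
      simp [hxz, hyz]

end Reflection

section Witt

variable {K V : Type*} [Field K] [NeZero (2 : K)] [AddCommGroup V] [Module K V]
  {B : BilinForm K V}

theorem exists_isometryEquiv_apply_eq_of_isOrthoᵢ (hB : B.IsSymm) {ι : Type*} {u v : ι → V}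
    (hu : B.IsOrthoᵢ u) (hv : B.IsOrthoᵢ v) (hne : ∀ i, B (u i) (u i) ≠ 0)
    (huv : ∀ i, B (u i) (u i) = B (v i) (v i)) (s : Finset ι) :
    ∃ σ : B.IsometryEquiv B, ∀ i ∈ s, σ (u i) = v i := by
  classical
  induction s using Finset.induction_on with
  | empty => exact ⟨.refl B, by simp⟩
  | insert j s hj ih =>
    obtain ⟨σ, hσ⟩ := ih
    obtain ⟨τ, hτj, hτ⟩ := exists_isometryEquiv_apply_eq_of_anisotropic hB
      (x := σ (u j)) (y := v j) (by simpa using hne j) (by simpa using huv j)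
    refine ⟨σ.trans τ, fun i hi => ?_⟩
    change τ (σ (u i)) = v i
    obtain rfl | his := Finset.mem_insert.1 hi
    · exact hτj
    · have hji : j ≠ i := by rintro rfl; exact hj his
      rw [hσ i his]
      refine hτ (v i) ?_ (hv hji)
      rw [← hσ i his, σ.map_app]
      exact hu hji

theorem exists_isometryEquiv_extending_of_nondegenerate_restrict (hB : B.IsSymm)
    {W W' : Submodule K V} [FiniteDimensional K W] (hW : (B.restrict W).Nondegenerate)
    (φ : (B.restrict W).IsometryEquiv (B.restrict W')) :
    ∃ σ : B.IsometryEquiv B, (∀ w : W, σ w = φ w) ∧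
      W.map (σ.toLinearEquiv : V →ₗ[K] V) = W' := by
  have := invertibleOfNonzero (two_ne_zero (α := K))
  obtain ⟨b, hb⟩ := LinearMap.BilinForm.exists_orthogonal_basis
    (LinearMap.BilinForm.isSymm_iff.1 (hB.restrict W))
  have hbne := hb.not_isOrtho_basis_self_of_separatingLeft hW.1
  obtain ⟨σ, hσ⟩ := exists_isometryEquiv_apply_eq_of_isOrthoᵢ hB
    (u := fun i => (b i : V)) (v := fun i => (φ (b i) : V)) hb
    (fun i j hij => (φ.map_app (b j) (b i)).trans (hb hij)) hbne
    (fun i => (φ.map_app (b i) (b i)).symm) Finset.univ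
  have hσφ : (σ.toLinearEquiv : V →ₗ[K] V) ∘ₗ W.subtype =
      W'.subtype ∘ₗ (φ.toLinearEquiv : W →ₗ[K] W') :=
    b.ext fun i => hσ i (Finset.mem_univ i)
  refine ⟨σ, LinearMap.congr_fun hσφ, ?_⟩
  calc W.map (σ.toLinearEquiv : V →ₗ[K] V)
      = LinearMap.range ((σ.toLinearEquiv : V →ₗ[K] V) ∘ₗ W.subtype) := by
        rw [LinearMap.range_comp, Submodule.range_subtype]
    _ = W' := by
        rw [hσφ, LinearMap.range_comp_of_range_eq_top _ φ.toLinearEquiv.range,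
          Submodule.range_subtype]

end Witt

section Transitivity

theorem exists_apply_ne_zero_and_apply_ne_zero {R M N P : Type*} [Semiring R] [AddCommMonoid M]
    [AddCommMonoid N] [AddCommMonoid P] [Module R M] [Module R N] [Module R P]
    {f : M →ₗ[R] N} {g : M →ₗ[R] P} (hf : f ≠ 0) (hg : g ≠ 0) : ∃ x, f x ≠ 0 ∧ g x ≠ 0 := by
  obtain ⟨y, hy⟩ := DFunLike.ne_iff.1 hf
  obtain ⟨z, hz⟩ := DFunLike.ne_iff.1 hg
  by_cases hgy : g y = 0
  · by_cases hfz : f z = 0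
    · exact ⟨y + z, by simpa [hfz] using hy, by simpa [hgy] using hz⟩
    · exact ⟨z, hfz, hz⟩
  · exact ⟨y, hy, hgy⟩

variable {K M N : Type*} [Field K] [NeZero (2 : K)] [AddCommGroup M] [Module K M]
  [AddCommGroup N] [Module K N] {B : BilinForm K M} {C : BilinForm K N}

theorem exists_isotropic_apply_ne_zero (hB : B.IsSymm) (hnd : B.Nondegenerate) {u v : M}
    (hu : u ≠ 0) (hv : v ≠ 0) (huu : B u u = 0) (huv : B u v = 0) :
    ∃ w, B w w = 0 ∧ B u w ≠ 0 ∧ B v w ≠ 0 := by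
  obtain ⟨x, hux, hvx⟩ := exists_apply_ne_zero_and_apply_ne_zero
    ((map_ne_zero_iff B (LinearMap.ker_eq_bot.1 hnd.ker_eq_bot)).2 hu)
    ((map_ne_zero_iff B (LinearMap.ker_eq_bot.1 hnd.ker_eq_bot)).2 hv)
  -- As `u` is isotropic, `x - t • u` has norm `B x x - 2 * t * B u x`, which is linear in `t`.
  refine ⟨x - (B x x / (2 * B u x)) • u, ?_, by simpa [huu] using hux,
    by simpa [hB.eq v u, huv] using hvx⟩
  simp only [map_sub, map_smul, smul_eq_mul, LinearMap.sub_apply, LinearMap.smul_apply,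
    hB.eq x u, huu]
  field_simp
  ring

theorem exists_isometryEquiv_apply_eq_of_isotropic (hB : B.IsSymm) {u v : M} (hu : B u u = 0)
    (hv : B v v = 0) (huv : B u v ≠ 0) : ∃ τ : B.IsometryEquiv B, τ u = v := by
  have hsub : B (u - v) (u - v) ≠ 0 := by
    have hnorm : B (u - v) (u - v) = -(2 * B u v) := by
      simp only [map_sub, LinearMap.sub_apply, hu, hv, hB.eq v u]
      ring
    rw [hnorm]
    exact neg_ne_zero.2 (mul_ne_zero two_ne_zero huv)
  exact ⟨_, reflectionIsometryEquiv_sub_apply hB (hu.trans hv.symm) hsub⟩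

theorem exists_isometryEquiv_apply_eq (hB : B.IsSymm) (hnd : B.Nondegenerate) {u v : M}
    (hu : u ≠ 0) (hv : v ≠ 0) (huv : B u u = B v v) : ∃ τ : B.IsometryEquiv B, τ u = v := by
  by_cases huu : B u u = 0
  · have hvv : B v v = 0 := huv ▸ huu
    by_cases hortho : B u v = 0
    · obtain ⟨w, hww, huw, hvw⟩ := exists_isotropic_apply_ne_zero hB hnd hu hv huu hortho
      obtain ⟨τ, rfl⟩ := exists_isometryEquiv_apply_eq_of_isotropic hB huu hww huw
      obtain ⟨ρ, rfl⟩ := exists_isometryEquiv_apply_eq_of_isotropic hB hww hvv (hB.eq v _ ▸ hvw)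
      exact ⟨τ.trans ρ, rfl⟩
    · exact exists_isometryEquiv_apply_eq_of_isotropic hB huu hvv hortho
  · obtain ⟨τ, hτ, -⟩ := exists_isometryEquiv_apply_eq_of_anisotropic hB huu huv
    exact ⟨τ, hτ⟩

theorem exists_isometryEquiv_apply_eq_of_equivalent (hC : C.IsSymm) (hnd : C.Nondegenerate)
    (hBC : B.Equivalent C) {u : M} {v : N} (hzero : u = 0 ↔ v = 0) (huv : B u u = C v v) :
    ∃ φ : B.IsometryEquiv C, φ u = v := by
  obtain ⟨φ⟩ := hBC
  by_cases hu : u = 0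
  · exact ⟨φ, by rw [hu, map_zero, hzero.1 hu]⟩
  · obtain ⟨τ, hτ⟩ := exists_isometryEquiv_apply_eq hC hnd (u := φ u) (v := v)
      (by simpa using hu) (mt hzero.2 hu) (by rw [φ.map_app, huv])
    exact ⟨φ.trans τ, hτ⟩

end Transitivity

section AlgClosed

variable {K M N : Type*} [Field K] [NeZero (2 : K)] [AddCommGroup M] [Module K M]
  [AddCommGroup N] [Module K N] {B : BilinForm K M} {C : BilinForm K N}

theorem equivalent_of_toQuadraticMap_equivalent (hB : B.IsSymm) (hC : C.IsSymm)
    (h : B.toQuadraticMap.Equivalent C.toQuadraticMap) : B.Equivalent C := by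
  obtain ⟨e⟩ := h
  refine ⟨⟨e.toLinearEquiv, fun x y => ?_⟩⟩
  have hpull : C.comp (e.toLinearEquiv : M →ₗ[K] N) (e.toLinearEquiv : M →ₗ[K] N) = B :=
    LinearMap.BilinForm.ext_of_isSymm ⟨fun x y => hC.eq _ _⟩ hB e.map_app
  exact LinearMap.congr_fun₂ hpull x y

theorem equivalent_of_finrank_eq [IsAlgClosed K] [FiniteDimensional K M] [FiniteDimensional K N]
    (hB : B.IsSymm) (hC : C.IsSymm) (hBnd : B.Nondegenerate) (hCnd : C.Nondegenerate)
    (hfinrank : finrank K M = finrank K N) : B.Equivalent C := by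
  have := invertibleOfNonzero (two_ne_zero (α := K))
  have hBsq := QuadraticForm.equivalent_weightedSumSquares_of_isAlgClosed B.toQuadraticMap
    ((QuadraticMap.associated_left_inverse K hB.eq).symm ▸ hBnd.1)
  have hCsq := QuadraticForm.equivalent_weightedSumSquares_of_isAlgClosed C.toQuadraticMap
    ((QuadraticMap.associated_left_inverse K hC.eq).symm ▸ hCnd.1)
  rw [hfinrank] at hBsq
  exact equivalent_of_toQuadraticMap_equivalent hB hC (hBsq.trans hCsq.symm)

end AlgClosed

theorem stabilizer_orbit_of_regular_containing_h_general {K V : Type*} [Field K] [IsAlgClosed K]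
    [NeZero (2 : K)] [AddCommGroup V] [Module K V] {B : BilinForm K V} (hB : B.IsSymm) {h : V}
    {W W' : Submodule K V} [FiniteDimensional K W] [FiniteDimensional K W']
    (hW : (B.restrict W).Nondegenerate) (hW' : (B.restrict W').Nondegenerate)
    (hhW : h ∈ W) (hhW' : h ∈ W') :
    (∃ σ : V ≃ₗ[K] V, B.IsOrthogonal σ ∧ σ h = h ∧ W.map (σ : V →ₗ[K] V) = W') ↔
      finrank K W = finrank K W' := by
  constructor
  · rintro ⟨σ, -, -, rfl⟩
    exact (σ.finrank_map_eq W).symm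
  · intro hfinrank
    have hequiv := equivalent_of_finrank_eq (hB.restrict W) (hB.restrict W') hW hW' hfinrank
    obtain ⟨φ, hφ⟩ := exists_isometryEquiv_apply_eq_of_equivalent (hB.restrict W') hW' hequiv
      (u := ⟨h, hhW⟩) (v := ⟨h, hhW'⟩) (by simp) rfl
    obtain ⟨σ, hσφ, hσW⟩ := exists_isometryEquiv_extending_of_nondegenerate_restrict hB hW φ
    have hσh : σ h = h := (hσφ ⟨h, hhW⟩).trans (congrArg Subtype.val hφ)
    exact ⟨σ.toLinearEquiv, fun x y => σ.map_app y x, hσh, hσW⟩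

/-- for regular subspaces `𝔥', 𝔥''` both containing `h`, some element
of `O(𝔥)` fixing `h` maps `𝔥'` onto `𝔥''` iff `dim 𝔥' = dim 𝔥''`. -/
theorem stabilizer_orbit_of_regular_containing_h
    {V : Type*} [AddCommGroup V] [Module ℂ V] [FiniteDimensional ℂ V]
    (B : LinearMap.BilinForm ℂ V)
    (hsymm : ∀ x y, B x y = B y x) (hnd : B.Nondegenerate)
    (h : V) (W W' : Submodule ℂ V)
    (hW : IsRegularSubspace B W) (hW' : IsRegularSubspace B W')
    (hhW : h ∈ W) (hhW' : h ∈ W') :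
    (∃ σ : V ≃ₗ[ℂ] V, (∀ x y, B (σ x) (σ y) = B x y) ∧ σ h = h ∧
        W.map (σ : V →ₗ[ℂ] V) = W') ↔
      Module.finrank ℂ W = Module.finrank ℂ W' := by
  have hB : B.IsSymm := ⟨hsymm⟩
  exact stabilizer_orbit_of_regular_containing_h_general hB (hW.nondegenerate_restrict hB)
    (hW'.nondegenerate_restrict hB) hhW hhW'
end
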